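/- Let G be a locally finite connected simple graph and (x,y) an edge of G such that no cycle of length 3, 4, or 5 in G passes through the edge (x,y). Then κ(x,y) = −2·max(0, 1 − 1/deg(x) − 1/deg(y)). In particular this formula holds for every edge whenever the girth of G is at least 6. -/

import Mathlib

open SimpleGraph

def Lip {V : Type*} (G : SimpleGraph V) (f : V → ℝ) : Prop :=
  ∀ a b : V, |f a - f b| ≤ (G.dist a b : ℝ)

noncomputable def deg {V : Type*} (G : SimpleGraph V) (x : V) : ℕ :=
  (G.neighborSet x).ncard

noncomputable def Ef {V : Type*} (G : SimpleGraph V) (x : V) (f : V → ℝ) : ℝ :=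
  (∑ᶠ z ∈ G.neighborSet x, f z) / (deg G x)

noncomputable def kappa {V : Type*} (G : SimpleGraph V) (x y : V) : ℝ :=
  1 - sSup {t : ℝ | ∃ f : V → ℝ, Lip G f ∧ t = Ef G x f - Ef G y f}

section GraphFunctions

variable {V : Type*} {G : SimpleGraph V}

lemma abs_sub_le_walk_length {f : V → ℝ} (hf : ∀ a b, G.Adj a b → |f a - f b| ≤ 1) {a b : V}
    (p : G.Walk a b) : |f a - f b| ≤ (p.length : ℝ) := by
  induction p with
  | nil => simp
  | @cons u v w h p ih =>
    have h₁ := abs_sub_le (f u) (f v) (f w)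
    have h₂ := hf u v h
    rw [Walk.length_cons]
    push_cast
    linarith

lemma lip_of_adj (hG : G.Connected) {f : V → ℝ} (hf : ∀ a b, G.Adj a b → |f a - f b| ≤ 1) :
    Lip G f := by
  intro a b
  obtain ⟨p, hp⟩ := hG.exists_walk_length_eq_dist a b
  rw [← hp]
  exact abs_sub_le_walk_length hf p

lemma Lip.abs_sub_le_one {f : V → ℝ} (hf : Lip G f) {a b : V} (h : G.Adj a b) :
    |f a - f b| ≤ 1 := by
  simpa [dist_eq_one_iff_adj.mpr h] using hf a b

lemma one_le_deg (hlf : ∀ v : V, (G.neighborSet v).Finite) {x y : V} (h : G.Adj x y) :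
    1 ≤ deg G x :=
  Nat.one_le_iff_ne_zero.mpr <| Set.ncard_ne_zero_of_mem (show y ∈ G.neighborSet x from h) (hlf x)

lemma Ef_neg (x : V) (f : V → ℝ) : Ef G x (fun v => -f v) = -Ef G x f := by
  unfold Ef
  rw [← neg_div]
  simp only [finsum_neg_distrib]

lemma Ef_le (hlf : ∀ v : V, (G.neighborSet v).Finite) {x y : V} (h : G.Adj x y) {f : V → ℝ}
    {M : ℝ} (hM : ∀ z, G.Adj x z → z ≠ y → f z ≤ M) :
    Ef G x f ≤ f y * (1 / deg G x) + (1 - 1 / deg G x) * M := by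
  classical
  have hd : (1 : ℝ) ≤ deg G x := by exact_mod_cast one_le_deg hlf h
  have hy : y ∈ (hlf x).toFinset := by simpa using h
  have hcard : (((hlf x).toFinset.erase y).card : ℝ) = deg G x - 1 := by
    rw [Finset.cast_card_erase_of_mem hy, deg, Set.ncard_eq_toFinset_card _ (hlf x)]
  have hsum : ∑ z ∈ (hlf x).toFinset.erase y, f z ≤ (deg G x - 1) * M := by
    rw [← hcard, ← nsmul_eq_mul]
    refine Finset.sum_le_card_nsmul _ _ _ fun z hz => ?_
    rw [Finset.mem_erase] at hz
    exact hM z (by simpa using hz.2) hz.1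
  rw [Ef, finsum_mem_eq_finite_toFinset_sum _ (hlf x), ← Finset.add_sum_erase _ _ hy,
    div_le_iff₀ (by linarith)]
  field_simp
  linarith

lemma le_Ef (hlf : ∀ v : V, (G.neighborSet v).Finite) {x y : V} (h : G.Adj x y) {f : V → ℝ}
    {m : ℝ} (hm : ∀ z, G.Adj x z → z ≠ y → m ≤ f z) :
    f y * (1 / deg G x) + (1 - 1 / deg G x) * m ≤ Ef G x f := by
  have := Ef_le hlf h (f := fun v => -f v) (M := -m) fun z hz hzy => neg_le_neg (hm z hz hzy)
  rw [Ef_neg] at this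
  linarith

lemma Ef_eq (hlf : ∀ v : V, (G.neighborSet v).Finite) {x y : V} (h : G.Adj x y) {f : V → ℝ}
    {m : ℝ} (hm : ∀ z, G.Adj x z → z ≠ y → f z = m) :
    Ef G x f = f y * (1 / deg G x) + (1 - 1 / deg G x) * m :=
  le_antisymm (Ef_le hlf h fun z hz hzy => (hm z hz hzy).le)
    (le_Ef hlf h fun z hz hzy => (hm z hz hzy).ge)

lemma Lip.Ef_sub_Ef_le (hlf : ∀ v : V, (G.neighborSet v).Finite) {x y : V} (h : G.Adj x y)
    {f : V → ℝ} (hf : Lip G f) :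
    Ef G x f - Ef G y f ≤ 1 + 2 * max 0 (1 - 1 / (deg G x : ℝ) - 1 / (deg G y : ℝ)) := by
  have hx := Ef_le hlf h (f := f) (M := f x + 1) fun z hz _ => by
    linarith [(abs_le.mp (hf.abs_sub_le_one hz)).1]
  have hy := le_Ef hlf h.symm (f := f) (m := f y - 1) fun z hz _ => by
    linarith [(abs_le.mp (hf.abs_sub_le_one hz)).2]
  obtain ⟨h₁, h₂⟩ := abs_le.mp (hf.abs_sub_le_one h)
  generalize 1 / (deg G x : ℝ) = p at *
  generalize 1 / (deg G y : ℝ) = q at *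
  rcases le_total 0 (1 - p - q) with hc | hc
  · rw [max_eq_right hc]
    nlinarith
  · rw [max_eq_left hc]
    nlinarith

/-- No cycle of length 3, 4 or 5 passes through the edge `(x, y)`. -/
def NoShortCycleThrough (G : SimpleGraph V) (x y : V) : Prop :=
  ∀ (u : V) (c : G.Walk u u), c.IsCycle → s(x, y) ∈ c.edges →
    ¬(c.length = 3 ∨ c.length = 4 ∨ c.length = 5)

namespace NoShortCycleThrough

variable {x y z w u : V}

lemma no_triangle (hc : NoShortCycleThrough G x y) (h : G.Adj x y) (hz : G.Adj x z) :
    ¬G.Adj y z := by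
  intro hyz
  refine hc x (.cons h (.cons hyz (.cons hz.symm .nil))) ?_ (by simp) (by simp)
  have := h.ne; have := hz.ne; have := hyz.ne
  simp [Walk.cons_isCycle_iff]
  grind

lemma no_square (hc : NoShortCycleThrough G x y) (h : G.Adj x y) (hz : G.Adj x z) (hzy : z ≠ y)
    (hw : G.Adj y w) (hwx : w ≠ x) : ¬G.Adj z w := by
  intro hzw
  refine hc x (.cons h (.cons hw (.cons hzw.symm (.cons hz.symm .nil)))) ?_ (by simp) (by simp)
  have := h.ne; have := hz.ne; have := hw.ne; have := hzw.ne
  simp [Walk.cons_isCycle_iff]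
  grind

lemma no_pentagon (hc : NoShortCycleThrough G x y) (h : G.Adj x y) (hz : G.Adj x z)
    (hzy : z ≠ y) (hw : G.Adj y w) (hwx : w ≠ x) (hux : u ≠ x) (huy : u ≠ y) (hzu : G.Adj z u) :
    ¬G.Adj u w := by
  intro huw
  have hzw : z ≠ w := by
    rintro rfl
    exact hc.no_triangle h hz hw
  refine hc x (.cons h (.cons hw (.cons huw.symm (.cons hzu.symm (.cons hz.symm .nil))))) ?_
    (by simp) (by simp)
  have := h.ne; have := hz.ne; have := hw.ne; have := hzu.ne; have := huw.ne
  simp [Walk.cons_isCycle_iff]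
  grind

end NoShortCycleThrough

open Classical in
/-- A 1-Lipschitz potential, decreasing from `2` on the neighbors of `x` to `-1` on the neighbors
of `y`, which is optimal when `x` and `y` are not leaves. -/
noncomputable def edgePotential (G : SimpleGraph V) (x y v : V) : ℝ :=
  if v = x then 1
  else if v = y then 0
  else if G.Adj x v then 2
  else if G.Adj y v then -1
  else if ∃ z, G.Adj x z ∧ z ≠ y ∧ G.Adj z v then 1
  else 0

lemma edgePotential_sub_le_one {x y : V} (h : G.Adj x y) (hc : NoShortCycleThrough G x y)
    {a b : V} (hab : G.Adj a b) : edgePotential G x y a - edgePotential G x y b ≤ 1 := by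
  have h3 := fun z => hc.no_triangle (z := z) h
  have h4 := fun z w => hc.no_square (z := z) (w := w) h
  have h5 := fun z w u => hc.no_pentagon (z := z) (w := w) (u := u) h
  have hba := hab.symm
  have hyx := h.symm
  unfold edgePotential
  split_ifs <;> first | (norm_num; done) | (exfalso; grind)

lemma lip_edgePotential (hG : G.Connected) {x y : V} (h : G.Adj x y)
    (hc : NoShortCycleThrough G x y) : Lip G (edgePotential G x y) :=
  lip_of_adj hG fun _ _ hab => abs_sub_le_iff.mpr
    ⟨edgePotential_sub_le_one h hc hab, edgePotential_sub_le_one h hc hab.symm⟩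

lemma Ef_edgePotential_sub (hlf : ∀ v : V, (G.neighborSet v).Finite) {x y : V} (h : G.Adj x y)
    (hc : NoShortCycleThrough G x y) :
    Ef G x (edgePotential G x y) - Ef G y (edgePotential G x y) =
      1 + 2 * (1 - 1 / (deg G x : ℝ) - 1 / (deg G y : ℝ)) := by
  have hx := Ef_eq hlf h (f := edgePotential G x y) (m := 2) fun z hz hzy => by
    simp [edgePotential, hz, hz.ne', hzy]
  have hy := Ef_eq hlf h.symm (f := edgePotential G x y) (m := -1) fun w hw hwx => by
    have : ¬G.Adj x w := fun hxw => hc.no_triangle h hxw hw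
    simp [edgePotential, hw, hw.ne', hwx, this]
  have hfx : edgePotential G x y x = 1 := by simp [edgePotential]
  have hfy : edgePotential G x y y = 0 := by simp [edgePotential, h.ne']
  rw [hx, hy, hfx, hfy]
  ring

open Classical in
lemma exists_lip_Ef_sub_eq_one (hlf : ∀ v : V, (G.neighborSet v).Finite) (hG : G.Connected)
    {x y : V} (h : G.Adj x y) (hc : NoShortCycleThrough G x y) :
    ∃ f : V → ℝ, Lip G f ∧ Ef G x f - Ef G y f = 1 := by
  refine ⟨fun v => if G.Adj x v then 1 else 0, lip_of_adj hG fun a b _ => ?_, ?_⟩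
  · split_ifs <;> norm_num
  · rw [Ef_eq hlf h (m := 1) fun z hz _ => if_pos hz,
      Ef_eq hlf h.symm (m := 0) fun w hw _ => if_neg fun hxw => hc.no_triangle h hxw hw]
    simp [h]

lemma NoShortCycleThrough.kappa_eq (hlf : ∀ v : V, (G.neighborSet v).Finite)
    (hG : G.Connected) {x y : V} (h : G.Adj x y) (hc : NoShortCycleThrough G x y) :
    kappa G x y = -2 * max 0 (1 - 1 / (deg G x : ℝ) - 1 / (deg G y : ℝ)) := by
  have key : IsGreatest {t : ℝ | ∃ f : V → ℝ, Lip G f ∧ t = Ef G x f - Ef G y f}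
      (1 + 2 * max 0 (1 - 1 / (deg G x : ℝ) - 1 / (deg G y : ℝ))) := by
    constructor
    · rcases le_total 0 (1 - 1 / (deg G x : ℝ) - 1 / (deg G y : ℝ)) with h0 | h0
      · rw [max_eq_right h0]
        exact ⟨_, lip_edgePotential hG h hc, (Ef_edgePotential_sub hlf h hc).symm⟩
      · obtain ⟨f, hf, hf1⟩ := exists_lip_Ef_sub_eq_one hlf hG h hc
        exact ⟨f, hf, by rw [max_eq_left h0, hf1]; ring⟩
    · rintro t ⟨f, hf, rfl⟩
      exact hf.Ef_sub_Ef_le hlf h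
  rw [kappa, key.csSup_eq]
  ring

lemma noShortCycleThrough_of_six_le_egirth (hg : (6 : ℕ∞) ≤ G.egirth) (x y : V) :
    NoShortCycleThrough G x y := by
  intro u c hcyc _ hlen
  have h6 : (6 : ℕ∞) ≤ c.length := le_egirth.mp hg u c hcyc
  have : 6 ≤ c.length := by exact_mod_cast h6
  omega

end GraphFunctions

/-- If no cycle of length 3, 4 or 5 passes through the edge `(x,y)` of a locally finite
connected graph, then `κ(x,y) = -2 max(0, 1 - 1/deg x - 1/deg y)`; in particular the
formula holds for every edge whenever the girth of `G` is at least 6. -/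
theorem kappa_no_short_cycle {V : Type*} (G : SimpleGraph V)
    (hlf : ∀ v : V, (G.neighborSet v).Finite) (hG : G.Connected) :
    (∀ x y : V, G.Adj x y →
      (∀ (u : V) (c : G.Walk u u), c.IsCycle → s(x, y) ∈ c.edges →
        ¬(c.length = 3 ∨ c.length = 4 ∨ c.length = 5)) →
      kappa G x y =
        -2 * max 0 (1 - 1 / (deg G x : ℝ) - 1 / (deg G y : ℝ))) ∧
    ((6 : ℕ∞) ≤ G.egirth → ∀ x y : V, G.Adj x y →
      kappa G x y =
        -2 * max 0 (1 - 1 / (deg G x : ℝ) - 1 / (deg G y : ℝ))) := by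
  exact ⟨fun x y h hc => NoShortCycleThrough.kappa_eq hlf hG h hc,
    fun hg x y h => (noShortCycleThrough_of_six_le_egirth hg x y).kappa_eq hlf hG h⟩
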